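/- There exist real numbers λ1, λ2, λ3, λ4 > 0 such that for every N ∈ {5, 6, 7} the polynomial Q_N(X) = (2N−7)λ1 X^{2N−7} − (N−3)λ2 X^{2N−6} − (N−3)λ3 X^{2N−5} − (N−3)λ4 X^{2N−4} − (N−3) has a positive real root, and the smallest positive root of Q_N is strictly smaller than every positive real root of the polynomial P_N(X) = (2N−7)λ1 X^{2N−6} − (N−3)λ2 X^{2N−5} − (N−3)λ3 X^{2N−4} − (N−3)λ4 X^{2N−3} − (N−3)X + 2(N−3). -/

import Mathlib

/-!
Two observations drive the proof: `P_N(X) = X Q_N(X) + 2(N−3)`, and `Q_N(X) + (N−3)` is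
`X^(2N−7)` times a function that does not increase on `X ≥ 0`. Hence, if `Q_N(b) ≥ 0` for some
`0 < b ≤ 2`, that function is positive on `(0, b]`, so there `Q_N(X) > −(N−3)` and
`P_N(X) > (2 − X)(N−3) ≥ 0`: every positive root of `P_N` lies beyond `b`, while `Q_N(0) < 0` puts
the first positive root of `Q_N` at or before `b`. When `λ₁ ≥ 1 + λ₂ + λ₃ + λ₄`,
the point `b = 1` works for all `N ≥ 4` at once.
-/

/-- `Q_N` for parameters `λ₁, λ₂, λ₃, λ₄`:
`Q_N(X) = (2N−7)λ₁X^(2N−7) − (N−3)λ₂X^(2N−6) − (N−3)λ₃X^(2N−5) − (N−3)λ₄X^(2N−4) − (N−3)`. -/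
noncomputable def QN (N : ℕ) (l1 l2 l3 l4 : ℝ) : ℝ → ℝ :=
  fun X => (2 * (N : ℝ) - 7) * l1 * X ^ (2 * N - 7) - ((N : ℝ) - 3) * l2 * X ^ (2 * N - 6) -
    ((N : ℝ) - 3) * l3 * X ^ (2 * N - 5) - ((N : ℝ) - 3) * l4 * X ^ (2 * N - 4) - ((N : ℝ) - 3)

/-- `P_N` for parameters `λ₁, λ₂, λ₃, λ₄`:
`P_N(X) = (2N−7)λ₁X^(2N−6) − (N−3)λ₂X^(2N−5) − (N−3)λ₃X^(2N−4) − (N−3)λ₄X^(2N−3) − (N−3)X + 2(N−3)`. -/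
noncomputable def PN (N : ℕ) (l1 l2 l3 l4 : ℝ) : ℝ → ℝ :=
  fun X => (2 * (N : ℝ) - 7) * l1 * X ^ (2 * N - 6) - ((N : ℝ) - 3) * l2 * X ^ (2 * N - 5) -
    ((N : ℝ) - 3) * l3 * X ^ (2 * N - 4) - ((N : ℝ) - 3) * l4 * X ^ (2 * N - 3) -
    ((N : ℝ) - 3) * X + 2 * ((N : ℝ) - 3)

open Set

lemma exists_isLeast_setOf_lt_and_eq {α β : Type*}
    [ConditionallyCompleteLinearOrder α] [DenselyOrdered α] [TopologicalSpace α] [OrderTopology α]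
    [LinearOrder β] [TopologicalSpace β] [OrderClosedTopology β]
    {f : α → β} {a b : α} {c : β} (hab : a ≤ b) (hf : ContinuousOn f (Icc a b))
    (ha : f a < c) (hb : c ≤ f b) :
    ∃ m ≤ b, IsLeast {x | a < x ∧ f x = c} m := by
  have hcompact : IsCompact (Icc a b ∩ f ⁻¹' {c}) :=
    isCompact_Icc.of_isClosed_subset
      (hf.preimage_isClosed_of_isClosed isClosed_Icc isClosed_singleton) inter_subset_left
  have hnonempty : (Icc a b ∩ f ⁻¹' {c}).Nonempty :=
    intermediate_value_Icc hab hf ⟨ha.le, hb⟩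
  obtain ⟨m, ⟨⟨ham, hmb⟩, hfm : f m = c⟩, hmin⟩ := hcompact.exists_isLeast hnonempty
  have ham' : a < m := ham.lt_of_ne fun h => ha.ne (h ▸ hfm)
  refine ⟨m, hmb, ⟨ham', hfm⟩, fun x ⟨hax, hfx⟩ => ?_⟩
  rcases le_total x b with hxb | hbx
  · exact hmin ⟨⟨hax.le, hxb⟩, hfx⟩
  · exact hmb.trans hbx

section

variable {N : ℕ} {l1 l2 l3 l4 : ℝ}

lemma continuous_QN : Continuous (QN N l1 l2 l3 l4) := by
  unfold QN
  fun_prop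

lemma QN_add_eq_pow_mul (hN : 4 ≤ N) (X : ℝ) :
    QN N l1 l2 l3 l4 X + (N - 3) =
      X ^ (2 * N - 7) * ((2 * N - 7) * l1 - (N - 3) * (l2 * X + l3 * X ^ 2 + l4 * X ^ 3)) := by
  have h6 : 2 * N - 6 = (2 * N - 7) + 1 := by lia
  have h5 : 2 * N - 5 = (2 * N - 7) + 2 := by lia
  have h4 : 2 * N - 4 = (2 * N - 7) + 3 := by lia
  simp only [QN, h6, h5, h4]
  ring

lemma PN_eq_mul_QN_add (hN : 4 ≤ N) (X : ℝ) :
    PN N l1 l2 l3 l4 X = X * QN N l1 l2 l3 l4 X + 2 * (N - 3) := by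
  have h6 : 2 * N - 6 = (2 * N - 7) + 1 := by lia
  have h5 : 2 * N - 5 = (2 * N - 6) + 1 := by lia
  have h4 : 2 * N - 4 = (2 * N - 5) + 1 := by lia
  have h3 : 2 * N - 3 = (2 * N - 4) + 1 := by lia
  simp only [PN, QN, h3, h4, h5, h6]
  ring

lemma natCast_sub_three_pos (hN : 4 ≤ N) : (0 : ℝ) < N - 3 := by
  have : (4 : ℝ) ≤ N := by exact_mod_cast hN
  linarith

lemma QN_zero_neg (hN : 4 ≤ N) : QN N l1 l2 l3 l4 0 < 0 := by
  have hfactor := QN_add_eq_pow_mul (l1 := l1) (l2 := l2) (l3 := l3) (l4 := l4) hN 0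
  rw [zero_pow (by lia), zero_mul] at hfactor
  linarith [natCast_sub_three_pos hN]

lemma neg_lt_QN_of_le (hN : 4 ≤ N) (h2 : 0 ≤ l2) (h3 : 0 ≤ l3) (h4 : 0 ≤ l4) {X b : ℝ}
    (hX : 0 < X) (hXb : X ≤ b) (hb : 0 ≤ QN N l1 l2 l3 l4 b) :
    -(N - 3 : ℝ) < QN N l1 l2 l3 l4 X := by
  have hN3 := natCast_sub_three_pos hN
  have hfactor_b : 0 < (2 * N - 7) * l1 - (N - 3) * (l2 * b + l3 * b ^ 2 + l4 * b ^ 3) := by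
    refine pos_of_mul_pos_right ?_ (pow_nonneg (hX.le.trans hXb) (2 * N - 7))
    rw [← QN_add_eq_pow_mul hN]
    linarith
  have hfactor_X : 0 < (2 * N - 7) * l1 - (N - 3) * (l2 * X + l3 * X ^ 2 + l4 * X ^ 3) :=
    hfactor_b.trans_le (by gcongr)
  have hpos : 0 < QN N l1 l2 l3 l4 X + (N - 3) := by
    rw [QN_add_eq_pow_mul hN]
    positivity
  linarith

lemma PN_pos_of_le (hN : 4 ≤ N) (h2 : 0 ≤ l2) (h3 : 0 ≤ l3) (h4 : 0 ≤ l4) {X b : ℝ}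
    (hX : 0 < X) (hXb : X ≤ b) (hb2 : b ≤ 2) (hb : 0 ≤ QN N l1 l2 l3 l4 b) :
    0 < PN N l1 l2 l3 l4 X :=
  calc
    0 ≤ (2 - X) * (N - 3) :=
      mul_nonneg (sub_nonneg.2 (hXb.trans hb2)) (natCast_sub_three_pos hN).le
    _ = X * -(N - 3) + 2 * (N - 3) := by ring
    _ < X * QN N l1 l2 l3 l4 X + 2 * (N - 3) := by
      gcongr
      exact neg_lt_QN_of_le hN h2 h3 h4 hX hXb hb
    _ = PN N l1 l2 l3 l4 X := (PN_eq_mul_QN_add hN X).symm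

theorem exists_isLeast_root_QN_lt_roots_PN (hN : 4 ≤ N) (h2 : 0 ≤ l2) (h3 : 0 ≤ l3) (h4 : 0 ≤ l4)
    {b : ℝ} (hb0 : 0 ≤ b) (hb2 : b ≤ 2) (hb : 0 ≤ QN N l1 l2 l3 l4 b) :
    ∃ m, IsLeast {X | 0 < X ∧ QN N l1 l2 l3 l4 X = 0} m ∧
      ∀ Y, 0 < Y → PN N l1 l2 l3 l4 Y = 0 → m < Y := by
  obtain ⟨m, hmb, hm⟩ :=
    exists_isLeast_setOf_lt_and_eq hb0 continuous_QN.continuousOn (QN_zero_neg hN) hb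
  refine ⟨m, hm, fun Y hY hroot => hmb.trans_lt ?_⟩
  by_contra! hYb
  exact (PN_pos_of_le hN h2 h3 h4 hY hYb hb2 hb).ne' hroot

lemma QN_one_nonneg (hN : 4 ≤ N) (h1 : 0 ≤ l1) (hsum : 1 + l2 + l3 + l4 ≤ l1) :
    0 ≤ QN N l1 l2 l3 l4 1 := by
  have hN4 : (0 : ℝ) ≤ N - 4 := sub_nonneg.2 (by exact_mod_cast hN)
  calc
    0 ≤ (N - 4) * l1 + (N - 3) * (l1 - (1 + l2 + l3 + l4)) :=
      add_nonneg (mul_nonneg hN4 h1)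
        (mul_nonneg (natCast_sub_three_pos hN).le (sub_nonneg.2 hsum))
    _ = QN N l1 l2 l3 l4 1 := by
      simp only [QN, one_pow]
      ring

theorem exists_params_black_hole_in_higher_dims_general (h2 : 0 ≤ l2) (h3 : 0 ≤ l3) (h4 : 0 ≤ l4)
    (hsum : 1 + l2 + l3 + l4 ≤ l1) (hN : 4 ≤ N) :
    (∃ X, 0 < X ∧ QN N l1 l2 l3 l4 X = 0) ∧
      ∃ m, IsLeast {X | 0 < X ∧ QN N l1 l2 l3 l4 X = 0} m ∧
        ∀ Y, 0 < Y → PN N l1 l2 l3 l4 Y = 0 → m < Y := by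
  have hleast := exists_isLeast_root_QN_lt_roots_PN hN h2 h3 h4 zero_le_one one_le_two
    (QN_one_nonneg hN (by linarith) hsum)
  exact ⟨hleast.imp fun _ hm => hm.1.1, hleast⟩

end

/-- There exist positive parameters `λ₁, λ₂, λ₃, λ₄` such that for each `N ∈ {5, 6, 7}`,
`Q_N` has a positive real root and its smallest positive root is strictly smaller than
every positive real root of `P_N` (black hole end state in higher dimensions). -/
theorem exists_params_black_hole_in_higher_dims :
    ∃ l1 l2 l3 l4 : ℝ, 0 < l1 ∧ 0 < l2 ∧ 0 < l3 ∧ 0 < l4 ∧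
      ∀ N : ℕ, N = 5 ∨ N = 6 ∨ N = 7 →
        (∃ X : ℝ, 0 < X ∧ QN N l1 l2 l3 l4 X = 0) ∧
        (∃ m : ℝ, IsLeast {X : ℝ | 0 < X ∧ QN N l1 l2 l3 l4 X = 0} m ∧
          ∀ Y : ℝ, 0 < Y → PN N l1 l2 l3 l4 Y = 0 → m < Y) := by
  refine ⟨5, 0.01, 2.3, 0.05, by norm_num, by norm_num, by norm_num, by norm_num, fun N hN => ?_⟩
  exact exists_params_black_hole_in_higher_dims_general
    (by norm_num) (by norm_num) (by norm_num) (by norm_num) (by lia)
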